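/- Discrete Gronwall bound for the scheme: if C_L ≥ 0 is any constant such that |g(r)|² ≤ C_L·(1 + r²) for all r ∈ ℝ, and A = Σ_{K∈V} m K, then for every n ∈ {1,…,N} the scheme solution satisfies E[‖u^n‖_m²] ≤ ((1 + 2·C_L·T)·E[‖u⁰‖_m²] + 2·C_L·A·T)·exp(2·C_L·T). -/

import Mathlib

open MeasureTheory ProbabilityTheory

/-- Discrete `L²` norm squared: `‖w‖_m² = Σ_K m K · (w K)²`. -/
noncomputable def normSq {V : Type} [Fintype V] (m : V → ℝ) (w : V → ℝ) : ℝ :=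
  ∑ K, m K * w K ^ 2

/-- Discrete `H¹` seminorm squared: `|w|₁² = (1/2) Σ_K Σ_L τ K L · (w K − w L)²`. -/
noncomputable def seminormSq {V : Type} [Fintype V] (τ : V → V → ℝ) (w : V → ℝ) : ℝ :=
  (1 / 2) * ∑ K, ∑ L, τ K L * (w K - w L) ^ 2

/-- The semi-implicit finite-volume scheme for the stochastic heat equation, in
abstract graph form, together with all the structural assumptions of the paper:
cell measures `m`, symmetric nonnegative transmissibilities `τ`, time horizon
`T > 0` divided into `N ≥ 1` steps of size `Δt = T/N`, a discrete filtration
`G`, Gaussian increments `ΔW` (each `ΔW (n+1)` is `G (n+1)`-measurable,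
independent of `G n`, centred with variance `Δt`), a Lipschitz nonlinearity `g`
(constant `L`), a square-integrable `G 0`-measurable initial datum `u 0`, and the
scheme equations defining `u (n+1)` from `u n`. -/
structure Scheme (V : Type) [Fintype V] [Nonempty V]
    (Ω : Type) [mΩ : MeasurableSpace Ω]
    (T L : ℝ) (g : ℝ → ℝ) (N : ℕ) where
  P : Measure Ω
  probP : IsProbabilityMeasure P
  m : V → ℝ
  m_pos : ∀ K, 0 < m K
  τ : V → V → ℝ
  τ_symm : ∀ K L', τ K L' = τ L' K
  τ_nonneg : ∀ K L', 0 ≤ τ K L'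
  τ_diag : ∀ K, τ K K = 0
  T_pos : 0 < T
  N_pos : 1 ≤ N
  L_nonneg : 0 ≤ L
  g_lip : ∀ r s : ℝ, |g r - g s| ≤ L * |r - s|
  G : ℕ → MeasurableSpace Ω
  G_le : ∀ n, G n ≤ mΩ
  G_mono : Monotone G
  ΔW : ℕ → Ω → ℝ
  ΔW_meas : ∀ n, n < N → Measurable[G (n + 1)] (ΔW (n + 1))
  ΔW_indep : ∀ n, n < N →
    Indep (MeasurableSpace.comap (ΔW (n + 1)) Real.measurableSpace) (G n) P
  ΔW_law : ∀ n, n < N →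
    P.map (ΔW (n + 1)) = gaussianReal 0 (Real.toNNReal (T / N))
  u : ℕ → Ω → V → ℝ
  u_meas : ∀ n, n ≤ N → Measurable[G n] (u n)
  u0_int : Integrable (fun ω => normSq m (u 0 ω)) P
  scheme : ∀ n, n < N → ∀ᵐ ω ∂P, ∀ K,
    m K / (T / N) * (u (n + 1) ω K - u n ω K)
      + ∑ L', τ K L' * (u (n + 1) ω K - u (n + 1) ω L')
      = m K / (T / N) * g (u n ω K) * ΔW (n + 1) ω

/-!
Multiplying the scheme by `u^{n+1}` and summing by parts shows that an implicit step does not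
increase the discrete `L²` norm, so `‖u^{n+1}‖_m² ≤ ‖u^n + g(u^n) ΔW_{n+1}‖_m²`. Since `ΔW_{n+1}`
is centred and independent of `u^n`, the cross term on the right vanishes in expectation, and the
growth condition on `g` leaves
`E‖u^{n+1}‖_m² ≤ (1 + C_L Δt) E‖u^n‖_m² + C_L A Δt`, to which the discrete Grönwall inequality
applies.
-/

open Finset

section Deterministic

variable {V : Type} [Fintype V] {m : V → ℝ} {τ : V → V → ℝ}

lemma normSq_nonneg (hm : ∀ K, 0 ≤ m K) (w : V → ℝ) : 0 ≤ normSq m w :=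
  sum_nonneg fun K _ => mul_nonneg (hm K) (sq_nonneg _)

lemma seminormSq_nonneg (hτ : ∀ K L, 0 ≤ τ K L) (w : V → ℝ) : 0 ≤ seminormSq τ w :=
  mul_nonneg (by norm_num) <|
    sum_nonneg fun K _ => sum_nonneg fun L _ => mul_nonneg (hτ K L) (sq_nonneg _)

lemma normSq_comp_le {g : ℝ → ℝ} {C : ℝ} (hm : ∀ K, 0 ≤ m K)
    (hg : ∀ r, g r ^ 2 ≤ C * (1 + r ^ 2)) (w : V → ℝ) :
    normSq m (fun K => g (w K)) ≤ C * (∑ K, m K + normSq m w) :=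
  calc ∑ K, m K * g (w K) ^ 2
    _ ≤ ∑ K, m K * (C * (1 + w K ^ 2)) :=
        sum_le_sum fun K _ => mul_le_mul_of_nonneg_left (hg (w K)) (hm K)
    _ = C * (∑ K, m K + normSq m w) := by
        rw [normSq, ← sum_add_distrib, mul_sum]
        exact sum_congr rfl fun K _ => by ring

lemma sum_flux_mul_eq_seminormSq (hτ : ∀ K L, τ K L = τ L K) (w : V → ℝ) :
    ∑ K, (∑ L, τ K L * (w K - w L)) * w K = seminormSq τ w := by
  have hswap : ∑ K, ∑ L, τ K L * (w K - w L) * w K = ∑ K, ∑ L, τ K L * (w L - w K) * w L := by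
    rw [sum_comm]
    exact sum_congr rfl fun K _ => sum_congr rfl fun L _ => by rw [hτ L K]
  have hadd : ∑ K, ∑ L, τ K L * (w K - w L) ^ 2 =
      ∑ K, ∑ L, τ K L * (w K - w L) * w K + ∑ K, ∑ L, τ K L * (w L - w K) * w L := by
    simp only [← sum_add_distrib]
    exact sum_congr rfl fun K _ => sum_congr rfl fun L _ => by ring
  simp only [sum_mul]
  rw [seminormSq, hadd, ← hswap]
  ring

lemma normSq_add_seminormSq_of_implicit_step {Δt : ℝ} (hτ : ∀ K L, τ K L = τ L K)
    {v w : V → ℝ} (h : ∀ K, m K * (v K - w K) + Δt * ∑ L, τ K L * (v K - v L) = 0) :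
    normSq m v + normSq m (v - w) + 2 * Δt * seminormSq τ v = normSq m w := by
  have htest : ∑ K, m K * (v K - w K) * v K + Δt * seminormSq τ v = 0 := by
    rw [← sum_flux_mul_eq_seminormSq hτ, mul_sum, ← sum_add_distrib]
    exact sum_eq_zero fun K _ => by linear_combination v K * h K
  have hpolar : normSq m v + normSq m (v - w) - normSq m w =
      2 * ∑ K, m K * (v K - w K) * v K := by
    simp only [normSq, Pi.sub_apply, mul_sum, ← sum_add_distrib, ← sum_sub_distrib]
    exact sum_congr rfl fun K _ => by ring
  linear_combination hpolar + 2 * htest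

lemma normSq_le_of_implicit_step {Δt : ℝ} (hm : ∀ K, 0 ≤ m K) (hτ : ∀ K L, τ K L = τ L K)
    (hτ₀ : ∀ K L, 0 ≤ τ K L) (hΔt : 0 ≤ Δt) {v w : V → ℝ}
    (h : ∀ K, m K * (v K - w K) + Δt * ∑ L, τ K L * (v K - v L) = 0) :
    normSq m v ≤ normSq m w := by
  have henergy := normSq_add_seminormSq_of_implicit_step hτ h
  have hdiff := normSq_nonneg hm (v - w)
  have hdiss := mul_nonneg hΔt (seminormSq_nonneg hτ₀ v)
  linarith

lemma discrete_gronwall_of_lt {a b c : ℕ → ℝ} {n : ℕ} (ha : 0 ≤ a 0)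
    (hstep : ∀ k < n, a (k + 1) ≤ (1 + c k) * a k + b k)
    (hc : ∀ k < n, 0 ≤ c k) (hb : ∀ k < n, 0 ≤ b k) :
    a n ≤ (a 0 + ∑ k ∈ range n, b k) * Real.exp (∑ k ∈ range n, c k) := by
  -- Freeze `a` at time `n`, so that the recursion holds at all times.
  have hfrozen (k : ℕ) : a (min (k + 1) n) ≤
      (1 + if k < n then c k else 0) * a (min k n) + if k < n then b k else 0 := by
    rcases lt_or_ge k n with hk | hk
    · simpa only [if_pos hk, min_eq_left hk.le, min_eq_left (Nat.succ_le_of_lt hk)]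
        using hstep k hk
    · simp [hk.not_gt, min_eq_right hk, min_eq_right (hk.trans k.le_succ)]
  have h := discrete_gronwall (u := fun k => a (min k n)) (by simpa using ha)
    (fun k _ => hfrozen k) (by grind) (by grind) (Nat.zero_le n)
  have hsum (f : ℕ → ℝ) : ∑ k ∈ range n, (if k < n then f k else 0) = ∑ k ∈ range n, f k :=
    sum_congr rfl fun k hk => if_pos (mem_range.1 hk)
  simpa only [min_self, Nat.zero_min, Nat.Ico_zero_eq_range, hsum] using h

lemma add_mul_exp_le_of_le {a b c t T : ℝ} (ha : 0 ≤ a) (hb : 0 ≤ b) (hc : 0 ≤ c) (ht : 0 ≤ t)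
    (htT : t ≤ T) :
    (a + b * t) * Real.exp (c * t) ≤
      ((1 + 2 * c * T) * a + 2 * b * T) * Real.exp (2 * c * T) := by
  have hT : 0 ≤ T := ht.trans htT
  have hfactor : a + b * t ≤ (1 + 2 * c * T) * a + 2 * b * T := by
    linarith [mul_le_mul_of_nonneg_left htT hb, mul_nonneg hb hT, mul_nonneg (mul_nonneg hc hT) ha]
  have hexponent : c * t ≤ 2 * c * T := by
    linarith [mul_le_mul_of_nonneg_left htT hc, mul_nonneg hc hT]
  exact mul_le_mul hfactor (Real.exp_le_exp.2 hexponent) (Real.exp_nonneg _)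
    ((add_nonneg ha (mul_nonneg hb ht)).trans hfactor)

end Deterministic

section Probability

variable {Ω : Type*} [MeasurableSpace Ω] {P : Measure Ω}

section Scalar

variable {X Y ξ : Ω → ℝ}

lemma memLp_two_mul_of_indepFun (hξ : MemLp ξ 2 P) (hY : MemLp Y 2 P) (hind : IndepFun ξ Y P) :
    MemLp (fun ω => ξ ω * Y ω) 2 P := by
  have hsq : Integrable (fun ω => ξ ω ^ 2 * Y ω ^ 2) P :=
    (hind.comp (measurable_id.pow_const 2) (measurable_id.pow_const 2)).integrable_mul
      hξ.integrable_sq hY.integrable_sq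
  refine (memLp_two_iff_integrable_sq (hξ.1.mul hY.1)).2 ?_
  simpa only [Pi.mul_apply, mul_pow] using hsq

lemma integral_sq_add_mul_of_indepFun [IsFiniteMeasure P] (hX : MemLp X 2 P) (hY : MemLp Y 2 P)
    (hξ : MemLp ξ 2 P) (hξ₀ : ∫ ω, ξ ω ∂P = 0) (hind : IndepFun ξ (fun ω => (X ω, Y ω)) P) :
    ∫ ω, (X ω + ξ ω * Y ω) ^ 2 ∂P = ∫ ω, X ω ^ 2 ∂P + (∫ ω, ξ ω ^ 2 ∂P) * ∫ ω, Y ω ^ 2 ∂P := by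
  have hindXY : IndepFun ξ (fun ω => X ω * Y ω) P :=
    hind.comp measurable_id (measurable_fst.mul measurable_snd)
  have hindY : IndepFun (fun ω => ξ ω ^ 2) (fun ω => Y ω ^ 2) P :=
    hind.comp (measurable_id.pow_const 2) (measurable_snd.pow_const 2)
  have hintXY : Integrable (fun ω => X ω * Y ω) P := hX.integrable_mul hY
  have hint_cross : Integrable (fun ω => ξ ω * (X ω * Y ω)) P :=
    hindXY.integrable_mul (hξ.integrable one_le_two) hintXY
  have hint_sq : Integrable (fun ω => ξ ω ^ 2 * Y ω ^ 2) P :=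
    hindY.integrable_mul hξ.integrable_sq hY.integrable_sq
  have hint_add : Integrable (fun ω => X ω ^ 2 + 2 * (ξ ω * (X ω * Y ω))) P :=
    hX.integrable_sq.add (hint_cross.const_mul 2)
  have hcross : ∫ ω, ξ ω * (X ω * Y ω) ∂P = 0 := by
    rw [hindXY.integral_fun_mul_eq_mul_integral hξ.1 hintXY.1, hξ₀, zero_mul]
  calc ∫ ω, (X ω + ξ ω * Y ω) ^ 2 ∂P
    _ = ∫ ω, (X ω ^ 2 + 2 * (ξ ω * (X ω * Y ω)) + ξ ω ^ 2 * Y ω ^ 2) ∂P := by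
        congr with ω; ring
    _ = ∫ ω, X ω ^ 2 ∂P + ∫ ω, ξ ω ^ 2 * Y ω ^ 2 ∂P := by
        rw [integral_add hint_add hint_sq, integral_add hX.integrable_sq (hint_cross.const_mul 2),
          integral_const_mul, hcross, mul_zero, add_zero]
    _ = ∫ ω, X ω ^ 2 ∂P + (∫ ω, ξ ω ^ 2 ∂P) * ∫ ω, Y ω ^ 2 ∂P := by
        rw [hindY.integral_fun_mul_eq_mul_integral hξ.integrable_sq.1 hY.integrable_sq.1]

lemma memLp_two_comp_of_sq_le [IsFiniteMeasure P] {g : ℝ → ℝ} {C : ℝ} (hg : Measurable g)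
    (hgrowth : ∀ r, g r ^ 2 ≤ C * (1 + r ^ 2)) (hX : MemLp X 2 P) :
    MemLp (fun ω => g (X ω)) 2 P := by
  have hgX := (hg.comp_aemeasurable hX.1.aemeasurable).aestronglyMeasurable
  refine (memLp_two_iff_integrable_sq hgX).2 <|
    (((integrable_const 1).add hX.integrable_sq).const_mul C).mono' (hgX.pow 2) <|
      ae_of_all _ fun ω => ?_
  rw [Real.norm_of_nonneg (sq_nonneg _)]
  exact hgrowth (X ω)

end Scalar

variable {V : Type} [Fintype V] {m : V → ℝ} {w : Ω → V → ℝ}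

lemma measurable_normSq (m : V → ℝ) : Measurable (normSq m) := by
  unfold normSq
  fun_prop

lemma integrable_normSq (m : V → ℝ) (hw : ∀ K, MemLp (fun ω => w ω K) 2 P) :
    Integrable (fun ω => normSq m (w ω)) P :=
  integrable_finsetSum _ fun K _ => (hw K).integrable_sq.const_mul (m K)

lemma integral_normSq_nonneg (hm : ∀ K, 0 ≤ m K) : 0 ≤ ∫ ω, normSq m (w ω) ∂P :=
  integral_nonneg fun ω => normSq_nonneg hm (w ω)

lemma integral_normSq (m : V → ℝ) (hw : ∀ K, MemLp (fun ω => w ω K) 2 P) :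
    ∫ ω, normSq m (w ω) ∂P = ∑ K, m K * ∫ ω, w ω K ^ 2 ∂P := by
  simp only [normSq]
  rw [integral_finsetSum _ fun K _ => (hw K).integrable_sq.const_mul (m K)]
  simp only [integral_const_mul]

lemma memLp_two_of_integrable_normSq (hm : ∀ K, 0 < m K) (hw : AEMeasurable w P)
    (hint : Integrable (fun ω => normSq m (w ω)) P) (K : V) : MemLp (fun ω => w ω K) 2 P := by
  have hwK : AEStronglyMeasurable (fun ω => w ω K) P :=
    ((measurable_pi_apply K).comp_aemeasurable hw).aestronglyMeasurable
  refine (memLp_two_iff_integrable_sq hwK).2 <|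
    (hint.const_mul (m K)⁻¹).mono' (hwK.pow 2) <| ae_of_all _ fun ω => ?_
  rw [Real.norm_of_nonneg (sq_nonneg _), inv_mul_eq_div, le_div_iff₀' (hm K)]
  exact single_le_sum (f := fun K => m K * w ω K ^ 2)
    (fun K _ => mul_nonneg (hm K).le (sq_nonneg _)) (mem_univ K)

lemma integral_normSq_add_mul_of_indepFun [IsFiniteMeasure P] (m : V → ℝ) {g : ℝ → ℝ}
    {ξ : Ω → ℝ} (hg : Measurable g) (hw : ∀ K, MemLp (fun ω => w ω K) 2 P)
    (hgw : ∀ K, MemLp (fun ω => g (w ω K)) 2 P) (hξ : MemLp ξ 2 P) (hξ₀ : ∫ ω, ξ ω ∂P = 0)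
    (hind : IndepFun ξ w P) :
    Integrable (fun ω => normSq m (fun K => w ω K + ξ ω * g (w ω K))) P ∧
    ∫ ω, normSq m (fun K => w ω K + ξ ω * g (w ω K)) ∂P =
      ∫ ω, normSq m (w ω) ∂P + (∫ ω, ξ ω ^ 2 ∂P) * ∫ ω, normSq m (fun K => g (w ω K)) ∂P := by
  have hindK (K : V) : IndepFun ξ (fun ω => (w ω K, g (w ω K))) P :=
    hind.comp measurable_id
      ((measurable_pi_apply K).prodMk (hg.comp (measurable_pi_apply K)))
  have hsum (K : V) : MemLp (fun ω => w ω K + ξ ω * g (w ω K)) 2 P :=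
    (hw K).add <| memLp_two_mul_of_indepFun hξ (hgw K) <|
      (hindK K).comp measurable_id measurable_snd
  refine ⟨integrable_normSq m hsum, ?_⟩
  rw [integral_normSq m hsum, integral_normSq m hw, integral_normSq m hgw, mul_sum,
    ← sum_add_distrib]
  refine sum_congr rfl fun K _ => ?_
  rw [integral_sq_add_mul_of_indepFun (hw K) (hgw K) hξ hξ₀ (hindK K)]
  ring

lemma integral_normSq_comp_le [IsProbabilityMeasure P] {g : ℝ → ℝ} {C : ℝ} (hm : ∀ K, 0 ≤ m K)
    (hgrowth : ∀ r, g r ^ 2 ≤ C * (1 + r ^ 2))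
    (hgw : Integrable (fun ω => normSq m (fun K => g (w ω K))) P)
    (hw : Integrable (fun ω => normSq m (w ω)) P) :
    ∫ ω, normSq m (fun K => g (w ω K)) ∂P ≤ C * (∑ K, m K + ∫ ω, normSq m (w ω) ∂P) :=
  calc ∫ ω, normSq m (fun K => g (w ω K)) ∂P
    _ ≤ ∫ ω, C * (∑ K, m K + normSq m (w ω)) ∂P :=
        integral_mono hgw (((integrable_const _).add hw).const_mul C)
          fun ω => normSq_comp_le hm hgrowth (w ω)
    _ = C * (∑ K, m K + ∫ ω, normSq m (w ω) ∂P) := by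
        rw [integral_const_mul, integral_add (integrable_const _) hw, integral_const,
          probReal_univ, one_smul]

lemma integral_normSq_le_of_noisy_step [IsProbabilityMeasure P] {τ : V → V → ℝ} {g : ℝ → ℝ}
    {C Δt : ℝ} {v : Ω → V → ℝ} {ξ : Ω → ℝ} (hm : ∀ K, 0 < m K) (hτ : ∀ K L, τ K L = τ L K)
    (hτ₀ : ∀ K L, 0 ≤ τ K L) (hΔt : 0 < Δt) (hg : Measurable g)
    (hgrowth : ∀ r, g r ^ 2 ≤ C * (1 + r ^ 2)) (hw : AEMeasurable w P) (hv : AEMeasurable v P)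
    (hint : Integrable (fun ω => normSq m (w ω)) P) (hξ : MemLp ξ 2 P) (hξ₀ : ∫ ω, ξ ω ∂P = 0)
    (hind : IndepFun ξ w P)
    (hstep : ∀ᵐ ω ∂P, ∀ K, m K / Δt * (v ω K - w ω K) + ∑ L, τ K L * (v ω K - v ω L) =
      m K / Δt * g (w ω K) * ξ ω) :
    Integrable (fun ω => normSq m (v ω)) P ∧
    ∫ ω, normSq m (v ω) ∂P ≤ (1 + C * ∫ ω, ξ ω ^ 2 ∂P) * ∫ ω, normSq m (w ω) ∂P +
      C * (∑ K, m K) * ∫ ω, ξ ω ^ 2 ∂P := by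
  have hwL := memLp_two_of_integrable_normSq hm hw hint
  have hgwL (K : V) : MemLp (fun ω => g (w ω K)) 2 P :=
    memLp_two_comp_of_sq_le hg hgrowth (hwL K)
  have hm₀ (K : V) : 0 ≤ m K := (hm K).le
  obtain ⟨hint_noise, heq_noise⟩ :=
    integral_normSq_add_mul_of_indepFun m hg hwL hgwL hξ hξ₀ hind
  have hcontr : ∀ᵐ ω ∂P, normSq m (v ω) ≤ normSq m (fun K => w ω K + ξ ω * g (w ω K)) := by
    filter_upwards [hstep] with ω hω
    refine normSq_le_of_implicit_step hm₀ hτ hτ₀ hΔt.le fun K => ?_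
    have hK := hω K
    field_simp at hK
    linear_combination hK
  have hint_v : Integrable (fun ω => normSq m (v ω)) P := by
    refine hint_noise.mono'
      ((measurable_normSq m).comp_aemeasurable hv).aestronglyMeasurable ?_
    filter_upwards [hcontr] with ω hω
    rwa [Real.norm_of_nonneg (normSq_nonneg hm₀ _)]
  refine ⟨hint_v, ?_⟩
  calc ∫ ω, normSq m (v ω) ∂P
    _ ≤ ∫ ω, normSq m (fun K => w ω K + ξ ω * g (w ω K)) ∂P :=
        integral_mono_ae hint_v hint_noise hcontr
    _ = ∫ ω, normSq m (w ω) ∂P +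
          (∫ ω, ξ ω ^ 2 ∂P) * ∫ ω, normSq m (fun K => g (w ω K)) ∂P := heq_noise
    _ ≤ ∫ ω, normSq m (w ω) ∂P +
          (∫ ω, ξ ω ^ 2 ∂P) * (C * (∑ K, m K + ∫ ω, normSq m (w ω) ∂P)) := by
        gcongr
        exact integral_normSq_comp_le hm₀ hgrowth (integrable_normSq m hgwL) hint
    _ = _ := by ring

theorem discrete_gronwall_bound_general [IsProbabilityMeasure P] {τ : V → V → ℝ} {g : ℝ → ℝ}
    {C : ℝ} {N : ℕ} {Δt : ℕ → ℝ} {u : ℕ → Ω → V → ℝ} {ξ : ℕ → Ω → ℝ} (hm : ∀ K, 0 < m K)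
    (hτ : ∀ K L, τ K L = τ L K) (hτ₀ : ∀ K L, 0 ≤ τ K L) (hΔt : ∀ n < N, 0 < Δt n)
    (hg : Measurable g) (hgrowth : ∀ r, g r ^ 2 ≤ C * (1 + r ^ 2))
    (hu : ∀ n ≤ N, AEMeasurable (u n) P) (hu₀ : Integrable (fun ω => normSq m (u 0 ω)) P)
    (hξ : ∀ n < N, MemLp (ξ n) 2 P) (hξ₀ : ∀ n < N, ∫ ω, ξ n ω ∂P = 0)
    (hξ₂ : ∀ n < N, ∫ ω, ξ n ω ^ 2 ∂P = Δt n) (hind : ∀ n < N, IndepFun (ξ n) (u n) P)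
    (hstep : ∀ n < N, ∀ᵐ ω ∂P, ∀ K, m K / Δt n * (u (n + 1) ω K - u n ω K) +
      ∑ L, τ K L * (u (n + 1) ω K - u (n + 1) ω L) = m K / Δt n * g (u n ω K) * ξ n ω)
    {n : ℕ} (hn : n ≤ N) :
    ∫ ω, normSq m (u n ω) ∂P ≤
      (∫ ω, normSq m (u 0 ω) ∂P + C * (∑ K, m K) * ∑ k ∈ range n, Δt k) *
        Real.exp (C * ∑ k ∈ range n, Δt k) := by
  have hC : 0 ≤ C := by simpa using (sq_nonneg (g 0)).trans (hgrowth 0)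
  have hA : 0 ≤ ∑ K, m K := sum_nonneg fun K _ => (hm K).le
  have hnoisy (k : ℕ) (hk : k < N) (hint : Integrable (fun ω => normSq m (u k ω)) P) :=
    integral_normSq_le_of_noisy_step hm hτ hτ₀ (hΔt k hk) hg hgrowth (hu k hk.le) (hu (k + 1) hk)
      hint (hξ k hk) (hξ₀ k hk) (hind k hk) (hstep k hk)
  have hint (k : ℕ) (hk : k ≤ N) : Integrable (fun ω => normSq m (u k ω)) P := by
    induction k with
    | zero => exact hu₀
    | succ k ih => exact (hnoisy k hk (ih (Nat.le_of_succ_le hk))).1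
  have hrec (k : ℕ) (hk : k < n) : ∫ ω, normSq m (u (k + 1) ω) ∂P ≤
      (1 + C * Δt k) * ∫ ω, normSq m (u k ω) ∂P + C * (∑ K, m K) * Δt k := by
    have hkN := hk.trans_le hn
    simpa only [hξ₂ k hkN] using (hnoisy k hkN (hint k hkN.le)).2
  have hpos (k : ℕ) (hk : k < n) : 0 ≤ Δt k := (hΔt k (hk.trans_le hn)).le
  simpa only [← mul_sum] using discrete_gronwall_of_lt (a := fun k => ∫ ω, normSq m (u k ω) ∂P)
    (integral_normSq_nonneg fun K => (hm K).le) hrec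
    (fun k hk => mul_nonneg hC (hpos k hk))
    (fun k hk => mul_nonneg (mul_nonneg hC hA) (hpos k hk))

section Gaussian

variable {X : Ω → ℝ} {v : NNReal}

lemma memLp_two_of_hasLaw_gaussianReal {μ : ℝ} (hX : HasLaw X (gaussianReal μ v) P) :
    MemLp X 2 P :=
  HasGaussianLaw.memLp_two ⟨hX.map_eq ▸ inferInstance⟩

lemma integral_of_hasLaw_gaussianReal {μ : ℝ} (hX : HasLaw X (gaussianReal μ v) P) :
    ∫ ω, X ω ∂P = μ :=
  hX.integral_eq.trans integral_id_gaussianReal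

lemma integral_sq_of_hasLaw_gaussianReal_zero (hX : HasLaw X (gaussianReal 0 v) P) :
    ∫ ω, X ω ^ 2 ∂P = v := by
  rw [← variance_of_integral_eq_zero hX.aemeasurable (integral_of_hasLaw_gaussianReal hX),
    hX.variance_eq, variance_id_gaussianReal]

end Gaussian

end Probability

namespace Scheme

variable {V : Type} [Fintype V] [Nonempty V] {Ω : Type} [MeasurableSpace Ω]
  {T L : ℝ} {g : ℝ → ℝ} {N n : ℕ}

lemma measurable_g (S : Scheme V Ω T L g N) : Measurable g :=
  (LipschitzWith.of_dist_le' S.g_lip).continuous.measurable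

lemma step_pos (S : Scheme V Ω T L g N) : 0 < T / N :=
  div_pos S.T_pos (Nat.cast_pos.2 S.N_pos)

lemma time_le (S : Scheme V Ω T L g N) (hn : n ≤ N) : n * (T / N) ≤ T :=
  calc n * (T / N)
    _ ≤ N * (T / N) := mul_le_mul_of_nonneg_right (Nat.cast_le.2 hn) S.step_pos.le
    _ = T := mul_div_cancel₀ T (Nat.cast_ne_zero.2 (Nat.one_le_iff_ne_zero.1 S.N_pos))

variable (S : Scheme V Ω T L g N)

instance : IsProbabilityMeasure S.P := S.probP

lemma measurable_u (hn : n ≤ N) : Measurable (S.u n) :=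
  (S.u_meas n hn).mono (S.G_le n) le_rfl

lemma hasLaw_ΔW (hn : n < N) : HasLaw (S.ΔW (n + 1)) (gaussianReal 0 (T / N).toNNReal) S.P where
  aemeasurable := ((S.ΔW_meas n hn).mono (S.G_le _) le_rfl).aemeasurable
  map_eq := S.ΔW_law n hn

lemma integral_ΔW_sq (hn : n < N) : ∫ ω, S.ΔW (n + 1) ω ^ 2 ∂S.P = T / N := by
  rw [integral_sq_of_hasLaw_gaussianReal_zero (S.hasLaw_ΔW hn), Real.coe_toNNReal _ S.step_pos.le]

lemma indepFun_ΔW_u (hn : n < N) : IndepFun (S.ΔW (n + 1)) (S.u n) S.P :=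
  (IndepFun_iff_Indep _ _ _).2 <|
    indep_of_indep_of_le_right (S.ΔW_indep n hn) (S.u_meas n hn.le).comap_le

lemma integral_normSq_le {C : ℝ} (hgrowth : ∀ r, g r ^ 2 ≤ C * (1 + r ^ 2)) (hn : n ≤ N) :
    ∫ ω, normSq S.m (S.u n ω) ∂S.P ≤
      (∫ ω, normSq S.m (S.u 0 ω) ∂S.P + C * (∑ K, S.m K) * (n * (T / N))) *
        Real.exp (C * (n * (T / N))) := by
  simpa only [sum_const, card_range, nsmul_eq_mul] using
    discrete_gronwall_bound_general (Δt := fun _ => T / N) (ξ := fun k => S.ΔW (k + 1))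
      S.m_pos S.τ_symm S.τ_nonneg (fun _ _ => S.step_pos) S.measurable_g hgrowth
      (fun _ hk => (S.measurable_u hk).aemeasurable) S.u0_int
      (fun _ hk => memLp_two_of_hasLaw_gaussianReal (S.hasLaw_ΔW hk))
      (fun _ hk => integral_of_hasLaw_gaussianReal (S.hasLaw_ΔW hk))
      (fun _ hk => S.integral_ΔW_sq hk) (fun _ hk => S.indepFun_ΔW_u hk) S.scheme hn

end Scheme

/-- **discrete Gronwall bound.** If `C_L ≥ 0` satisfies
`|g r|² ≤ C_L (1 + r²)` for all `r`, and `A = Σ_K m K`, then for every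
`n ∈ {1,…,N}` the scheme solution satisfies
`E[‖uⁿ‖_m²] ≤ ((1 + 2 C_L T) E[‖u⁰‖_m²] + 2 C_L A T) exp(2 C_L T)`. -/
theorem discrete_gronwall_bound
    {V : Type} [Fintype V] [Nonempty V] {Ω : Type} [MeasurableSpace Ω]
    {T L : ℝ} {g : ℝ → ℝ} {N : ℕ} (S : Scheme V Ω T L g N)
    (C_L : ℝ) (hCL : 0 ≤ C_L)
    (hgrowth : ∀ r : ℝ, |g r| ^ 2 ≤ C_L * (1 + r ^ 2)) :
    ∀ n, 1 ≤ n → n ≤ N →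
      (∫ ω, normSq S.m (S.u n ω) ∂S.P) ≤
        ((1 + 2 * C_L * T) * (∫ ω, normSq S.m (S.u 0 ω) ∂S.P)
            + 2 * C_L * (∑ K, S.m K) * T)
          * Real.exp (2 * C_L * T) := by
  intro n _ hn
  have hm (K : V) : 0 ≤ S.m K := (S.m_pos K).le
  refine (S.integral_normSq_le (by simpa only [sq_abs] using hgrowth) hn).trans ?_
  simpa only [mul_assoc] using
    add_mul_exp_le_of_le (integral_normSq_nonneg hm) (mul_nonneg hCL (sum_nonneg fun K _ => hm K))
      hCL (mul_nonneg n.cast_nonneg S.step_pos.le) (S.time_le hn)
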